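/- arXiv:1906.00326 — 2 statements merged into one kernel-verified Lean document; each statement's English description precedes it below -/
import Mathlib

section
/- Let n, K, w, h be integers with 1 ≤ w ≤ K ≤ n and 0 ≤ h ≤ w·n/(e²·K). Then the probability that a uniformly random string in {0,1}^n of Hamming weight h has exactly w ones among its first K coordinates is at most e^{−w}; that is, C(K,w)·C(n−K,h−w)/C(n,h) ≤ e^{−w} (where binomial coefficients with out-of-range arguments are 0). -/
/-- The probability that a uniformly random string in `{0,1}^n` of Hamming weight `h`
has exactly `w` ones among its first `K` coordinates: `C(K,w)·C(n-K,h-w)/C(n,h)`,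
where out-of-range binomial coefficients are `0`. -/
noncomputable def pval (n K w h : ℕ) : ℝ :=
  if w ≤ h then (K.choose w : ℝ) * ((n - K).choose (h - w) : ℝ) / (n.choose h : ℝ) else 0

theorem df_aux (h n : ℕ) (hn : h ≤ n) (w : ℕ) :
    h.descFactorial w * n ^ w ≤ n.descFactorial w * h ^ w := by
  induction w with
  | zero => simp
  | succ k ih =>
    rw [Nat.descFactorial_succ, Nat.descFactorial_succ, pow_succ, pow_succ]
    have h1 : (h - k) * n ≤ (n - k) * h := by
      rw [Nat.sub_mul, Nat.sub_mul, Nat.mul_comm n h]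
      exact Nat.sub_le_sub_left (Nat.mul_le_mul_left k hn) _
    calc _ = ((h - k) * n) * (h.descFactorial k * n ^ k) := by ring
      _ ≤ ((n - k) * h) * (n.descFactorial k * h ^ k) := Nat.mul_le_mul h1 ih
      _ = _ := by ring

theorem ch_aux (h n : ℕ) (hn : h ≤ n) (w : ℕ) :
    h.choose w * n ^ w ≤ n.choose w * h ^ w := by
  have := df_aux h n hn w
  rw [Nat.descFactorial_eq_factorial_mul_choose, Nat.descFactorial_eq_factorial_mul_choose,
    mul_assoc, mul_assoc] at this
  exact Nat.le_of_mul_le_mul_left this (Nat.factorial_pos w)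

theorem stmt16 (n K w h : ℕ) (hw : 1 ≤ w) (hwK : w ≤ K) (hKn : K ≤ n)
    (hh : (h : ℝ) ≤ (w : ℝ) * (n : ℝ) / (Real.exp 2 * (K : ℝ))) :
    pval n K w h ≤ Real.exp (-(w : ℝ)) := by
  unfold pval
  split_ifs with hwh
  swap
  · positivity
  rcases Nat.lt_or_ge n h with hlt | hn
  · rw [Nat.choose_eq_zero_of_lt hlt]
    simp only [Nat.cast_zero, div_zero]
    positivity
  have hK0 : (0 : ℝ) < K := by exact_mod_cast (by omega : 0 < K)
  have hn0 : (0 : ℝ) < n := by exact_mod_cast (by omega : 0 < n)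
  have hc0 : (0 : ℝ) < n.choose h := by exact_mod_cast Nat.choose_pos hn
  have hcw0 : (0 : ℝ) < n.choose w := by exact_mod_cast Nat.choose_pos (hwK.trans hKn)
  have e1 : (n.choose h : ℝ) * h.choose w = n.choose w * (n - w).choose (h - w) := by
    exact_mod_cast Nat.choose_mul (n := n) hwh
  have e2 : (h.choose w : ℝ) * n ^ w ≤ n.choose w * h ^ w := by
    exact_mod_cast ch_aux h n hn w
  have e3 : ((n - K).choose (h - w) : ℝ) ≤ (n - w).choose (h - w) := by
    exact_mod_cast Nat.choose_le_choose _ (by omega)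
  have e4 : ((n - w).choose (h - w) : ℝ) / n.choose h ≤ (h / n : ℝ) ^ w := by
    rw [div_pow, div_le_div_iff₀ hc0 (by positivity)]
    refine le_of_mul_le_mul_left ?_ hcw0
    calc _ = (n.choose h : ℝ) * (h.choose w * n ^ w) := by rw [← mul_assoc, ← e1]; ring
      _ ≤ (n.choose h : ℝ) * (n.choose w * h ^ w) := by gcongr
      _ = _ := by ring
  have e5 : (K.choose w : ℝ) ≤ K ^ w / w.factorial := Nat.choose_le_pow_div w K
  have e6 : (K : ℝ) * (h / n) ≤ w * Real.exp (-2) := by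
    rw [Real.exp_neg]
    rw [le_div_iff₀ (by positivity)] at hh
    rw [← mul_div_assoc, div_le_iff₀ hn0, ← div_eq_mul_inv, div_mul_eq_mul_div,
      le_div_iff₀ (by positivity)]
    linarith
  have e7 : (w : ℝ) ^ w / w.factorial ≤ Real.exp w :=
    Real.pow_div_factorial_le_exp _ (by positivity) w
  calc (K.choose w : ℝ) * ((n - K).choose (h - w) : ℝ) / (n.choose h : ℝ)
      ≤ (K.choose w : ℝ) * ((n - w).choose (h - w) : ℝ) / (n.choose h : ℝ) := by gcongr
    _ = (K.choose w : ℝ) * (((n - w).choose (h - w) : ℝ) / (n.choose h : ℝ)) := by ring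
    _ ≤ (K ^ w / w.factorial) * (h / n : ℝ) ^ w := by gcongr
    _ = (K * (h / n : ℝ)) ^ w / w.factorial := by rw [mul_pow]; ring
    _ ≤ (w * Real.exp (-2)) ^ w / w.factorial := by gcongr
    _ = (w : ℝ) ^ w / w.factorial * Real.exp (-2) ^ w := by rw [mul_pow]; ring
    _ ≤ Real.exp w * Real.exp (-2) ^ w := by gcongr
    _ = Real.exp (-(w : ℝ)) := by
      rw [← Real.exp_nat_mul, ← Real.exp_add]
      congr 1
      ring
end

section
/- There is a universal constant C > 0 such that the following holds. Let t, n, k, K be positive integers with K ≤ n/64, let f_1, …, f_n : {0,1}^t → {0,1}, and let X, Y be symmetric, perfectly k-wise indistinguishable probability distributions on {0,1}^{t·n}. Write X = X_1⋯X_n and Y = Y_1⋯Y_n where each block X_i, Y_i consists of t bits, and define the distributions X' = (f_1(X_1),…,f_n(X_n)) and Y' = (f_1(Y_1),…,f_n(Y_n)) on {0,1}^n. Then there exist probability distributions A and B on {0,1}^n that are perfectly K-wise indistinguishable and satisfy TV(X', A) ≤ δ and TV(Y', B) ≤ δ, where δ = C·(tK)^{3/2}·n^K·exp(−k²/(1156·t·K))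 and TV denotes total variation distance. -/
open Finset

variable {ι : Type*} [Fintype ι] [DecidableEq ι]

/-- Hamming weight of a Boolean string. -/
def wt (x : ι → Bool) : ℕ := (Finset.univ.filter (fun i => x i = true)).card

/-- `μ` is a probability distribution on `{0,1}^ι`. -/
def IsProb (μ : (ι → Bool) → ℝ) : Prop :=
  (∀ x, 0 ≤ μ x) ∧ ∑ x : ι → Bool, μ x = 1

/-- `μ` is symmetric: `μ x` depends only on the Hamming weight of `x`. -/
def SymmDist (μ : (ι → Bool) → ℝ) : Prop := ∀ x y, wt x = wt y → μ x = μ y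

/-- The probability, under `μ`, of agreeing with `z` on the coordinates in `S`;
this describes the marginal distribution `μ|_S`. -/
def marg (μ : (ι → Bool) → ℝ) (S : Finset ι) (z : ι → Bool) : ℝ :=
  ∑ x : ι → Bool, if ∀ i ∈ S, x i = z i then μ x else 0

/-- Perfect `k`-wise indistinguishability: equality of all marginals on sets of
size at most `k`. -/
def PerfIndist (μ ν : (ι → Bool) → ℝ) (k : ℕ) : Prop :=
  ∀ S : Finset ι, S.card ≤ k → ∀ z, marg μ S z = marg ν S z

/-- The distribution of `(f_1(X_1), …, f_n(X_n))` where `X = X_1 ⋯ X_n ∼ μ` is a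
distribution on `t·n` bits split into `n` blocks of `t` bits. -/
def push {t n : ℕ} (f : Fin n → (Fin t → Bool) → Bool)
    (μ : (Fin n × Fin t → Bool) → ℝ) (z : Fin n → Bool) : ℝ :=
  ∑ x : Fin n × Fin t → Bool, if ∀ i, f i (fun j => x (i, j)) = z i then μ x else 0

/-- Total variation distance between two distributions on `{0,1}^n`. -/
noncomputable def TV {n : ℕ} (P Q : (Fin n → Bool) → ℝ) : ℝ := (∑ z : Fin n → Bool, |P z - Q z|) / 2


lemma aux_log {ρ : ℝ} (h0 : 0 < ρ) (h1 : ρ ≤ 1/63) (w y : ℂ) (hy : ‖y‖ = ρ) :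
    ‖(1 + y) ^ w‖ ≤ Real.exp (w.re * Real.log (1 + ρ) + 9/4 * ρ * (‖w‖ - w.re)) := by
  have hρ : (0:ℝ) < 1 + ρ := by linarith
  set e : ℂ := (y - ρ) / ((1 + ρ : ℝ) : ℂ) with he
  have hρc : ((1 + ρ : ℝ) : ℂ) ≠ 0 := by exact_mod_cast hρ.ne'
  have h1y : 1 + y = ((1 + ρ : ℝ) : ℂ) * (1 + e) := by
    rw [he]; field_simp; push_cast; ring
  have hy2 : y.re ^ 2 + y.im ^ 2 = ρ ^ 2 := by
    rw [← hy, ← Complex.normSq_eq_norm_sq, Complex.normSq_apply]; ring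
  have hyre : y.re ≤ ρ := by nlinarith [sq_nonneg y.im]
  have hne : 1 + y ≠ 0 := by
    intro h
    have : y.re = -1 := by
      have := congrArg Complex.re h
      simp at this; linarith
    nlinarith [sq_nonneg y.im]
  have hne' : 1 + e ≠ 0 := by
    intro h; rw [h, mul_zero] at h1y; exact hne h1y
  have hesq : ‖e‖ ^ 2 = 2 * ρ * (ρ - y.re) / (1 + ρ) ^ 2 := by
    rw [he, norm_div, div_pow, Complex.norm_real, Real.norm_of_nonneg hρ.le,
      ← Complex.normSq_eq_norm_sq, Complex.normSq_apply]
    congr 1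
    simp
    nlinarith
  have henorm : ‖e‖ ≤ 1/2 := by
    rw [he, norm_div, Complex.norm_real, Real.norm_of_nonneg hρ.le, div_le_iff₀ hρ]
    have : ‖y - (ρ:ℂ)‖ ≤ ρ + ρ := by
      refine (norm_sub_le _ _).trans ?_
      rw [hy, Complex.norm_real, Real.norm_of_nonneg h0.le]
    linarith
  have h1e : ‖1 + e‖ ^ 2 = 1 - 2 * (ρ - y.re) / (1 + ρ) ^ 2 := by
    have : ‖1 + y‖ = (1 + ρ) * ‖1 + e‖ := by
      rw [h1y, norm_mul, Complex.norm_real, Real.norm_of_nonneg hρ.le]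
    have h2 : ‖1 + y‖ ^ 2 = (1 + ρ) ^ 2 - 2 * (ρ - y.re) := by
      rw [← Complex.normSq_eq_norm_sq, Complex.normSq_apply]
      simp; nlinarith
    rw [this, mul_pow] at h2
    field_simp; linarith
  set ℓ := Complex.log (1 + e) with hℓ
  have hlog : Complex.log (1 + y) = Real.log (1 + ρ) + ℓ := by
    rw [h1y, Complex.log_ofReal_mul hρ hne']
  have hl1 : ‖ℓ‖ ≤ 3/2 * ‖e‖ := Complex.norm_log_one_add_half_le_self henorm
  have hl2 : ℓ.re ≤ - ((ρ - y.re) / (1 + ρ) ^ 2) := by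
    rw [hℓ, Complex.log_re]
    have hpos : 0 < ‖1 + e‖ := norm_pos_iff.mpr hne'
    have := Real.log_le_sub_one_of_pos (pow_pos hpos 2)
    rw [Real.log_pow, h1e] at this
    push_cast at this
    have h3 : 2 * (ρ - y.re) / (1 + ρ) ^ 2 = 2 * ((ρ - y.re) / (1 + ρ) ^ 2) := by ring
    rw [h3] at this
    linarith
  have hl3 : ‖ℓ‖ ^ 2 + 2 * (9/4 * ρ) * ℓ.re ≤ 0 := by
    have h5 : ‖ℓ‖ ^ 2 ≤ 9/4 * ‖e‖ ^ 2 := by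
      nlinarith [norm_nonneg ℓ, norm_nonneg e]
    have h4 : 2 * ρ * (ρ - y.re) / (1 + ρ) ^ 2 = 2 * ρ * ((ρ - y.re) / (1 + ρ) ^ 2) := by ring
    rw [hesq, h4] at h5
    nlinarith
  have hl4 : ‖ℓ + ((9/4 * ρ : ℝ) : ℂ)‖ ≤ 9/4 * ρ := by
    apply (sq_le_sq₀ (norm_nonneg _) (by positivity)).mp
    rw [← Complex.normSq_eq_norm_sq] at hl3 ⊢
    rw [Complex.normSq_apply] at hl3 ⊢
    simp at hl3 ⊢
    nlinarith
  rw [Complex.cpow_def_of_ne_zero hne, Complex.norm_exp, hlog]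
  apply Real.exp_le_exp.mpr
  have h6 : (w * (ℓ + ((9/4 * ρ : ℝ) : ℂ))).re ≤ ‖w‖ * (9/4 * ρ) := by
    refine (Complex.re_le_norm _).trans ?_
    rw [norm_mul]
    exact mul_le_mul_of_nonneg_left hl4 (norm_nonneg _)
  have h7 : ((↑(Real.log (1 + ρ)) + ℓ) * w).re =
     w.re * Real.log (1+ρ) + (w * (ℓ + ((9/4 * ρ : ℝ) : ℂ))).re - 9/4*ρ * w.re := by
    simp only [Complex.mul_re, Complex.add_re, Complex.add_im, Complex.ofReal_re, Complex.ofReal_im]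
    ring
  rw [h7]; linarith

lemma aux_ideriv (w : ℂ) (n : ℕ) : ∀ y : ℂ, ‖y‖ < 1 →
    iteratedDeriv n (fun y : ℂ => (1 + y) ^ w) y
      = (descPochhammer ℂ n).eval w * (1 + y) ^ (w - n) := by
  induction n with
  | zero => intro y hy; simp
  | succ n ih =>
    intro y hy
    rw [iteratedDeriv_succ]
    have hev : iteratedDeriv n (fun y : ℂ => (1 + y) ^ w) =ᶠ[nhds y]
        fun y => (descPochhammer ℂ n).eval w * (1 + y) ^ (w - n) := by
      have : Metric.ball (0:ℂ) 1 ∈ nhds y := Metric.isOpen_ball.mem_nhds (by simpa using hy)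
      filter_upwards [this] with z hz
      exact ih z (by simpa using hz)
    rw [hev.deriv_eq]
    have hs : 1 + y ∈ Complex.slitPlane := Complex.mem_slitPlane_of_norm_lt_one hy
    have hd : HasDerivAt (fun y : ℂ => (1 + y) ^ (w - n)) ((w - n) * (1 + y) ^ (w - n - 1) * 1) y :=
      HasDerivAt.cpow_const ((hasDerivAt_id y).const_add 1) (by simpa using hs)
    rw [(hd.const_mul _).deriv, descPochhammer_succ_eval]
    push_cast
    rw [show w - ((n:ℂ) + 1) = w - n - 1 by ring]
    ring

lemma aux_choose {ρ : ℝ} (h0 : 0 < ρ) (h1 : ρ ≤ 1/63) (w : ℂ) (j : ℕ) :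
    ‖(descPochhammer ℂ j).eval w‖ / j.factorial ≤
      Real.exp (w.re * Real.log (1 + ρ) + 9/4 * ρ * (‖w‖ - w.re)) / ρ ^ j := by
  have hd : DiffContOnCl ℂ (fun y : ℂ => (1 + y) ^ w) (Metric.ball 0 ρ) := by
    apply DifferentiableOn.diffContOnCl
    rw [closure_ball _ h0.ne']
    intro y hy
    have hy' : ‖y‖ < 1 := by
      have : ‖y‖ ≤ ρ := by simpa using hy
      linarith
    have hs : 1 + y ∈ Complex.slitPlane := Complex.mem_slitPlane_of_norm_lt_one hy'
    exact ((HasDerivAt.cpow_const (c := w) ((hasDerivAt_id y).const_add 1)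
      (by simpa using hs)).differentiableAt).differentiableWithinAt
  have := Complex.norm_iteratedDeriv_le_of_forall_mem_sphere_norm_le j h0 hd
    (C := Real.exp (w.re * Real.log (1 + ρ) + 9/4 * ρ * (‖w‖ - w.re)))
    (fun z hz => aux_log h0 h1 w z (by simpa using hz))
  rw [aux_ideriv w j 0 (by simp)] at this
  simp at this
  rw [div_le_iff₀ (by positivity)]
  refine this.trans (le_of_eq ?_)
  ring

lemma aux_ellipse (θ : ℂ) : ‖(1 + Complex.cos θ) / 2‖ + ‖(1 - Complex.cos θ) / 2‖ = Real.cosh θ.im := by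
  have h1 : (1 + Complex.cos θ) / 2 = Complex.cos (θ/2) ^ 2 := by
    rw [Complex.cos_sq]; ring_nf
  have h2 : (1 - Complex.cos θ) / 2 = Complex.sin (θ/2) ^ 2 := by
    rw [Complex.sin_sq, Complex.cos_sq]; ring_nf
  rw [h1, h2, norm_pow, norm_pow, ← Complex.normSq_eq_norm_sq, ← Complex.normSq_eq_norm_sq]
  obtain ⟨a, b⟩ : ∃ a b : ℝ, θ / 2 = a + b * Complex.I := ⟨_, _, (Complex.re_add_im _).symm⟩
  obtain ⟨b, hb⟩ := b
  have : θ.im = 2 * b := by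
    have := congrArg Complex.im hb
    simp at this
    linarith
  rw [this, hb, Complex.cos_add_mul_I, Complex.sin_add_mul_I, Complex.normSq_apply, Complex.normSq_apply]
  simp only [← Complex.ofReal_cos, ← Complex.ofReal_sin, ← Complex.ofReal_cosh, ← Complex.ofReal_sinh]
  simp only [Complex.sub_re, Complex.add_re, Complex.sub_im, Complex.add_im, Complex.mul_re, Complex.mul_im,
    Complex.ofReal_re, Complex.ofReal_im, Complex.I_re, Complex.I_im]
  rw [Real.cosh_two_mul]
  have := Real.sin_sq_add_cos_sq a
  ring_nf
  have e1 : Real.cos a ^ 2 = 1 - Real.sin a ^ 2 := by linarith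
  rw [e1]; ring

lemma aux_fourier (M : ℕ) (c : ℕ → ℂ) (b B : ℝ)
    (h : ∀ a : ℝ, ‖∑ d ∈ range (M+1), c d * Complex.cos (d * (a - b * Complex.I))‖ ≤ B)
    (d : ℕ) (hd : d ≠ 0) (hdM : d ≤ M) : ‖c d‖ ≤ 2 * B * Real.exp (-(d * b)) := by
  have hint : ∀ m : ℤ, m ≠ 0 → ∫ x in (0:ℝ)..(2*Real.pi), Complex.exp ((m * Complex.I) * x) = 0 := by
    intro m hm
    rw [integral_exp_mul_complex (by simp [hm])]
    have : Complex.exp (m * Complex.I * ((2 * Real.pi : ℝ) : ℂ)) = 1 := by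
      rw [Complex.exp_eq_one_iff]
      exact ⟨m, by push_cast; ring⟩
    rw [this]; simp
  have hterm : ∀ d' : ℕ, ∫ x in (0:ℝ)..(2*Real.pi), Complex.exp (-(d * Complex.I) * x) *
      (c d' * Complex.cos (d' * (x - b * Complex.I))) =
        if d' = d then c d * (Real.pi * Real.exp (d * b)) else 0 := by
    intro d'
    have : ∀ x : ℝ, Complex.exp (-(d * Complex.I) * x) *
      (c d' * Complex.cos (d' * (x - b * Complex.I))) =
       (c d' / 2 * Complex.exp (d' * b)) * Complex.exp ((((d':ℤ) - d : ℤ) * Complex.I) * x)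
       + (c d' / 2 * Complex.exp (-(d' * b))) * Complex.exp (((-(d':ℤ) - d : ℤ) * Complex.I) * x) := by
      intro x
      rw [Complex.cos]
      have e1 : Complex.exp (d' * (x - b * Complex.I) * Complex.I) =
         Complex.exp (d' * b) * Complex.exp (d' * Complex.I * x) := by
        rw [← Complex.exp_add]; congr 1; ring_nf; rw [Complex.I_sq]; ring
      have e2 : Complex.exp (-(d' * (x - b * Complex.I)) * Complex.I) =
         Complex.exp (-(d' * b)) * Complex.exp (-(d' * Complex.I * x)) := by
        rw [← Complex.exp_add]; congr 1; ring_nf; rw [Complex.I_sq]; ring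
      have e3 : Complex.exp ((((d':ℤ) - d : ℤ) * Complex.I) * x) =
         Complex.exp (-(d * Complex.I) * x) * Complex.exp (d' * Complex.I * x) := by
        rw [← Complex.exp_add]; congr 1; push_cast; ring
      have e4 : Complex.exp (((-(d':ℤ) - d : ℤ) * Complex.I) * x) =
         Complex.exp (-(d * Complex.I) * x) * Complex.exp (-(d' * Complex.I * x)) := by
        rw [← Complex.exp_add]; congr 1; push_cast; ring
      rw [e1, e2, e3, e4]; ring
    simp_rw [this]
    rw [intervalIntegral.integral_add (Continuous.intervalIntegrable (by fun_prop) _ _)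
      (Continuous.intervalIntegrable (by fun_prop) _ _),
      intervalIntegral.integral_const_mul, intervalIntegral.integral_const_mul,
      hint (-(d':ℤ) - d) (by omega)]
    split_ifs with hdd
    · subst hdd
      simp
      ring
    · rw [hint ((d':ℤ) - d) (by omega)]; simp
  have hsum : ∫ x in (0:ℝ)..(2*Real.pi), Complex.exp (-(d * Complex.I) * x) *
      (∑ d' ∈ range (M+1), c d' * Complex.cos (d' * (x - b * Complex.I))) =
      c d * (Real.pi * Real.exp (d * b)) := by
    simp_rw [mul_sum]
    rw [intervalIntegral.integral_finsetSum
      (fun i _ => Continuous.intervalIntegrable (by fun_prop) _ _)]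
    simp_rw [hterm]
    simp
    intro h; omega
  have hb := intervalIntegral.norm_integral_le_of_norm_le_const (a := 0) (b := 2 * Real.pi) (C := B)
    (f := fun x : ℝ => Complex.exp (-(d * Complex.I) * x) *
      (∑ d' ∈ range (M+1), c d' * Complex.cos (d' * (x - b * Complex.I)))) (by
      intro x _
      rw [norm_mul]
      have : ‖Complex.exp (-(d * Complex.I) * x)‖ = 1 := by
        rw [Complex.norm_exp]; simp
      rw [this, one_mul]; exact h x)
  rw [hsum, norm_mul, norm_mul] at hb
  have hpi := Real.pi_pos
  rw [Complex.norm_real, Complex.norm_real, Real.norm_of_nonneg hpi.le,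
    Real.norm_of_nonneg (Real.exp_pos _).le, sub_zero, abs_of_pos (by positivity)] at hb
  rw [Real.exp_neg, ← div_eq_mul_inv, le_div_iff₀ (Real.exp_pos _)]
  have : Real.pi * (‖c d‖ * Real.exp (d * b)) ≤ Real.pi * (2 * B) := by linarith
  exact le_of_mul_le_mul_left this hpi

lemma aux_cheb (M : ℕ) (q : Polynomial ℂ) (hq : q.natDegree ≤ M) :
    ∃ c : ℕ → ℂ, q = ∑ d ∈ range (M+1), Polynomial.C (c d) * Polynomial.Chebyshev.T ℂ d := by
  induction M generalizing q with
  | zero =>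
    refine ⟨fun _ => q.coeff 0, ?_⟩
    rw [Polynomial.eq_C_of_natDegree_le_zero hq]
    simp
  | succ M ih =>
    set lc := (Polynomial.Chebyshev.T ℂ ((M+1 : ℕ) : ℤ)).coeff (M+1) with hlc
    have hT : (Polynomial.Chebyshev.T ℂ ((M+1 : ℕ) : ℤ)).natDegree = M+1 := by
      rw [Polynomial.Chebyshev.natDegree_T]; rfl
    have hlc0 : lc ≠ 0 := by
      rw [hlc]
      nth_rw 2 [← hT]
      rw [Polynomial.coeff_natDegree, Polynomial.leadingCoeff_ne_zero]
      intro h; rw [h] at hT; simp at hT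
    obtain ⟨c, hc⟩ := ih (q - Polynomial.C (q.coeff (M+1) / lc) *
        Polynomial.Chebyshev.T ℂ ((M+1 : ℕ) : ℤ)) (by
      rw [Polynomial.natDegree_le_iff_coeff_eq_zero]
      intro m hm
      rw [Polynomial.coeff_sub, Polynomial.coeff_C_mul]
      rcases (Nat.succ_le_of_lt hm).eq_or_lt with h | h
      · have : m = M + 1 := by omega
        subst this
        rw [← hlc]; field_simp; ring
      · rw [Polynomial.coeff_eq_zero_of_natDegree_lt (lt_of_le_of_lt hq h),
          Polynomial.coeff_eq_zero_of_natDegree_lt (p := Polynomial.Chebyshev.T ℂ ((M+1 : ℕ) : ℤ)) (n := m)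
            (by rw [hT]; exact h)]; simp)
    refine ⟨fun d => if d = M+1 then q.coeff (M+1) / lc else c d, ?_⟩
    rw [sum_range_succ]
    simp only [if_true]
    rw [← sub_eq_iff_eq_add, hc]
    apply sum_congr rfl
    intro d hd
    rw [if_neg]
    simp at hd; omega

lemma aux_fact_upper (n : ℕ) (hn : n ≠ 0) :
    (n.factorial : ℝ) ≤ Real.exp 1 * √n * (n / Real.exp 1) ^ n := by
  obtain ⟨m, rfl⟩ := Nat.exists_eq_succ_of_ne_zero hn
  have h := Stirling.stirlingSeq'_antitone (Nat.zero_le m)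
  simp only [Function.comp, Nat.succ_eq_add_one, zero_add] at h
  rw [Stirling.stirlingSeq_one, Stirling.stirlingSeq, div_le_iff₀ (by positivity)] at h
  refine h.trans (le_of_eq ?_)
  rw [Real.sqrt_mul (by norm_num)]
  have : √(2:ℝ) ≠ 0 := by positivity
  field_simp

lemma aux_stirling (N M : ℕ) (hM : 0 < M) (hN : M < N) :
    (1 + (M:ℝ) / (N - M)) ^ N / ((M:ℝ) / (N - M)) ^ M ≤ 9 * √M * N.choose M := by
  obtain ⟨L, rfl⟩ := Nat.exists_eq_add_of_lt hN
  set P := L + 1 with hP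
  have hPN : M + L + 1 = M + P := by omega
  rw [hPN]
  have hP0 : P ≠ 0 := by omega
  clear_value P
  clear hN hPN hP
  have e0 : (((M + P : ℕ) : ℝ) - M) = P := by push_cast; ring
  rw [e0]
  have hPp : (0:ℝ) < P := by positivity
  have hMp : (0:ℝ) < M := by positivity
  have hE := Real.exp_pos 1
  have h1 := aux_fact_upper M hM.ne'
  have h2 := aux_fact_upper P hP0
  have h3 := Stirling.le_factorial_stirling (M + P)
  have h4 : (((M+P).choose M : ℕ) : ℝ) * M.factorial * P.factorial = (M+P).factorial := by
    have := Nat.add_choose_mul_factorial_mul_factorial M P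
    rw [← Nat.choose_symm_add] at this
    exact_mod_cast this
  have h5 : √(P:ℝ) ≤ √(2 * Real.pi * ((M+P : ℕ) : ℝ)) := by
    apply Real.sqrt_le_sqrt
    push_cast
    nlinarith [Real.pi_gt_three]
  have h6 : √(P:ℝ) * (((M+P:ℕ):ℝ) / Real.exp 1) ^ (M+P) ≤
     ((M+P).choose M : ℕ) * (Real.exp 1 * √M * (M / Real.exp 1) ^ M) * (Real.exp 1 * √P * (P / Real.exp 1) ^ P) := by
    calc _ ≤ √(2 * Real.pi * ((M+P : ℕ) : ℝ)) * (((M+P:ℕ):ℝ) / Real.exp 1) ^ (M+P) := by gcongr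
      _ ≤ _ := h3
      _ = _ := h4.symm
      _ ≤ _ := by gcongr
  have h7 : ((M+P:ℕ):ℝ) ^ (M+P) ≤ ((M+P).choose M : ℕ) * (Real.exp 1 ^ 2 * √M * M ^ M * P ^ P) := by
    have hsP : 0 < √(P:ℝ) := by positivity
    simp only [div_pow] at h6
    have e1 : ((M+P).choose M : ℕ) * (Real.exp 1 * √M * (M ^ M/ Real.exp 1 ^ M)) * (Real.exp 1 * √P * (P ^ P / Real.exp 1 ^P))
      = (√P / Real.exp 1 ^ (M+P)) * (((M+P).choose M : ℕ) * (Real.exp 1 ^ 2 * √M * M ^ M * P ^ P)) := by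
      rw [pow_add]; field_simp
    have e2 : √(P:ℝ) * (((M+P:ℕ):ℝ) ^ (M+P) / Real.exp 1 ^ (M+P)) = (√P / Real.exp 1 ^ (M+P)) * ((M+P:ℕ):ℝ) ^ (M+P) := by
      field_simp
    rw [e1, e2] at h6
    exact le_of_mul_le_mul_left h6 (by positivity)
  have e3 : (1 + (M:ℝ) / P) ^ (M+P) / ((M:ℝ) / P) ^ M = ((M+P:ℕ):ℝ) ^ (M+P) / (M ^ M * P ^ P) := by
    have : 1 + (M:ℝ)/P = ((M+P:ℕ):ℝ) / P := by push_cast; field_simp; ring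
    rw [this, div_pow, div_pow, pow_add (P:ℝ)]
    field_simp
  rw [e3, div_le_iff₀ (by positivity)]
  refine h7.trans ?_
  have : Real.exp 1 ^ 2 ≤ 9 := by nlinarith [Real.exp_one_lt_three]
  calc _ = Real.exp 1 ^ 2 * (√M * ((M+P).choose M : ℕ) * (M ^ M * P ^ P)) := by ring
    _ ≤ 9 * (√M * ((M+P).choose M : ℕ) * (M ^ M * P ^ P)) := by gcongr
    _ = _ := by ring

noncomputable def qpoly (N M : ℕ) (g : ℕ → ℝ) : Polynomial ℂ :=
  ∑ j ∈ range (M+1), Polynomial.C ((g j : ℂ) / (N.choose M * j.factorial * (M-j).factorial)) *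
    (descPochhammer ℂ j * (descPochhammer ℂ (M-j)).comp (Polynomial.C (N:ℂ) - Polynomial.X))

lemma qpoly_natDegree (N M : ℕ) (g : ℕ → ℝ) : (qpoly N M g).natDegree ≤ M := by
  apply Polynomial.natDegree_sum_le_of_forall_le
  intro j hj
  refine (Polynomial.natDegree_C_mul_le _ _).trans ?_
  refine Polynomial.natDegree_mul_le.trans ?_
  rw [descPochhammer_natDegree, Polynomial.natDegree_comp, descPochhammer_natDegree]
  have : (Polynomial.C (N:ℂ) - Polynomial.X).natDegree ≤ 1 := by
    refine (Polynomial.natDegree_sub_le _ _).trans ?_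
    simp
  simp at hj
  nlinarith [Nat.mul_le_mul_left (M-j) this, Nat.add_sub_cancel' (show j ≤ M by omega)]

lemma qpoly_eval_nat (N M : ℕ) (g : ℕ → ℝ) (w : ℕ) (hw : w ≤ N) :
    (qpoly N M g).eval (w:ℂ) =
      ((∑ j ∈ range (M+1), g j * (w.choose j * (N-w).choose (M-j)) / N.choose M : ℝ) : ℂ) := by
  rw [qpoly, Polynomial.eval_finsetSum]
  push_cast
  apply sum_congr rfl
  intro j hj
  simp only [Polynomial.eval_mul, Polynomial.eval_C, Polynomial.eval_comp, Polynomial.eval_sub, Polynomial.eval_X]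
  rw [← Nat.cast_sub hw, descPochhammer_eval_eq_descFactorial, descPochhammer_eval_eq_descFactorial,
    Nat.descFactorial_eq_factorial_mul_choose, Nat.descFactorial_eq_factorial_mul_choose]
  have h1 : (j.factorial : ℂ) ≠ 0 := by exact_mod_cast j.factorial_ne_zero
  have h2 : ((M-j).factorial : ℂ) ≠ 0 := by exact_mod_cast (M-j).factorial_ne_zero
  push_cast
  field_simp

lemma qpoly_bound (N M : ℕ) (hM : 0 < M) (hN : 64 * M ≤ N) (g : ℕ → ℝ) (hg : ∀ j, |g j| ≤ 1) (θ : ℂ) :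
    ‖(qpoly N M g).eval (N * ((1 + Complex.cos θ) / 2))‖ ≤
      (M+1) * (9 * √M) * Real.exp (4 * M * (Real.cosh θ.im - 1)) := by
  set ρ : ℝ := (M:ℝ) / (N - M) with hρ
  set w : ℂ := N * ((1 + Complex.cos θ) / 2) with hw
  have hMp : (0:ℝ) < M := by positivity
  have hN' : (64:ℝ) * M ≤ N := by exact_mod_cast hN
  have hNM : (0:ℝ) < N - M := by linarith
  have h0 : 0 < ρ := by positivity
  have h1 : ρ ≤ 1/63 := by rw [hρ, div_le_iff₀ hNM]; linarith
  have hchoose : (0:ℝ) < N.choose M := by exact_mod_cast Nat.choose_pos (by omega)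
  have hst := aux_stirling N M hM (by omega)
  rw [← hρ] at hst
  have hNw : (N:ℂ) - w = N * ((1 - Complex.cos θ) / 2) := by rw [hw]; ring
  have hell : ‖w‖ + ‖(N:ℂ) - w‖ = N * Real.cosh θ.im := by
    rw [hNw, hw, norm_mul, norm_mul, ← mul_add, aux_ellipse]; simp
  have hterm : ∀ j ∈ range (M+1), ‖((g j : ℂ) / (N.choose M * j.factorial * (M-j).factorial)) *
    ((descPochhammer ℂ j).eval w * (descPochhammer ℂ (M-j)).eval ((N:ℂ) - w))‖ ≤
      (9 * √M) * Real.exp (4 * M * (Real.cosh θ.im - 1)) := by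
    intro j hj
    have hj' : j ≤ M := by simp at hj; omega
    have b1 := aux_choose h0 h1 w j
    have b2 := aux_choose h0 h1 ((N:ℂ) - w) (M-j)
    have e1 : ‖((g j : ℂ) / (N.choose M * j.factorial * (M-j).factorial)) *
      ((descPochhammer ℂ j).eval w * (descPochhammer ℂ (M-j)).eval ((N:ℂ) - w))‖ =
        |g j| * ((‖(descPochhammer ℂ j).eval w‖ / j.factorial) *
          (‖(descPochhammer ℂ (M-j)).eval ((N:ℂ) - w)‖ / (M-j).factorial)) / N.choose M := by
      simp only [norm_mul, norm_div, Complex.norm_natCast, Complex.norm_real, Real.norm_eq_abs]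
      field_simp
    rw [e1, div_le_iff₀ hchoose]
    have e2 : Real.exp (w.re * Real.log (1 + ρ) + 9/4 * ρ * (‖w‖ - w.re)) / ρ ^ j *
      (Real.exp (((N:ℂ) - w).re * Real.log (1 + ρ) + 9/4 * ρ * (‖(N:ℂ) - w‖ - ((N:ℂ) - w).re)) / ρ ^ (M-j))
      = (1 + ρ) ^ N / ρ ^ M * Real.exp (9/4 * ρ * N * (Real.cosh θ.im - 1)) := by
      have e3 : (1 + ρ) ^ N = Real.exp (N * Real.log (1+ρ)) := by
        rw [Real.exp_nat_mul, Real.exp_log (by linarith)]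
      rw [div_mul_div_comm, ← pow_add, Nat.add_sub_cancel' hj', e3, div_mul_eq_mul_div (Real.exp (N * Real.log (1+ρ))),
        ← Real.exp_add, ← Real.exp_add]
      congr 2
      simp only [Complex.sub_re, Complex.natCast_re]
      linear_combination 9/4*ρ * hell
    calc _ ≤ 1 * ((Real.exp (w.re * Real.log (1 + ρ) + 9/4 * ρ * (‖w‖ - w.re)) / ρ ^ j) *
      (Real.exp (((N:ℂ) - w).re * Real.log (1 + ρ) + 9/4 * ρ * (‖(N:ℂ) - w‖ - ((N:ℂ) - w).re)) / ρ ^ (M-j))) := by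
          gcongr; exact hg j
      _ = (1 + ρ) ^ N / ρ ^ M * Real.exp (9/4 * ρ * N * (Real.cosh θ.im - 1)) := by rw [one_mul, e2]
      _ ≤ (9 * √M * N.choose M) * Real.exp (4 * M * (Real.cosh θ.im - 1)) := by
          have hc : 0 ≤ Real.cosh θ.im - 1 := by linarith [Real.one_le_cosh θ.im]
          have hr : 9/4 * ρ * N ≤ 4 * M := by
            rw [hρ]
            have : 9/4 * ((M:ℝ)/(N-M)) * N = (9/4 * M * N) / (N - M) := by ring
            rw [this, div_le_iff₀ hNM]; nlinarith
          gcongr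
      _ = _ := by ring
  rw [qpoly, Polynomial.eval_finsetSum]
  simp only [Polynomial.eval_mul, Polynomial.eval_C, Polynomial.eval_comp, Polynomial.eval_sub, Polynomial.eval_X]
  refine (norm_sum_le_of_le _ hterm).trans (le_of_eq ?_)
  simp
  ring

lemma main_moment (N M k : ℕ) (hM : 0 < M) (hN : 64 * M ≤ N) (g : ℕ → ℝ) (hg : ∀ j, |g j| ≤ 1)
    (σ : ℕ → ℝ) (hσ : ∑ w ∈ range (N+1), |σ w| ≤ 2)
    (hmom : ∀ i ≤ k, ∑ w ∈ range (N+1), σ w * (w:ℝ) ^ i = 0) :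
    |∑ w ∈ range (N+1), σ w * ∑ j ∈ range (M+1), g j * (w.choose j * (N-w).choose (M-j)) / N.choose M| ≤
      144 * (M:ℝ) ^ 3 * Real.exp (-(k:ℝ)^2 / (16 * M)) := by
  have hMp : (0:ℝ) < M := by positivity
  have hM1 : (1:ℝ) ≤ M := by exact_mod_cast hM
  have hN0 : (N:ℂ) ≠ 0 := by
    have : N ≠ 0 := by omega
    exact_mod_cast this
  have hN0' : (0:ℝ) < N := by
    have : 0 < N := by omega
    exact_mod_cast this
  obtain ⟨c, hc⟩ := aux_cheb M ((qpoly N M g).comp (Polynomial.C ((N:ℂ)/2) * (1 + Polynomial.X))) (by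
    rw [Polynomial.natDegree_comp]
    have h1 : (Polynomial.C ((N:ℂ)/2) * (1 + Polynomial.X)).natDegree ≤ 1 := by
      refine (Polynomial.natDegree_C_mul_le _ _).trans ?_
      refine (Polynomial.natDegree_add_le _ _).trans ?_
      simp
    have := qpoly_natDegree N M g
    nlinarith)
  have heval : ∀ x : ℂ, (qpoly N M g).eval (N * ((1 + x) / 2)) =
      ∑ d ∈ range (M+1), c d * (Polynomial.Chebyshev.T ℂ d).eval x := by
    intro x
    have := congrArg (Polynomial.eval x) hc
    simp only [Polynomial.eval_comp, Polynomial.eval_mul, Polynomial.eval_C, Polynomial.eval_add,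
      Polynomial.eval_one, Polynomial.eval_X, Polynomial.eval_finsetSum] at this
    rw [← this]; congr 1; ring
  -- moments of Chebyshev polynomials
  set m : ℕ → ℂ := fun d => ∑ w ∈ range (N+1), (σ w : ℂ) * (Polynomial.Chebyshev.T ℂ d).eval (2 * (w:ℂ) / N - 1) with hm
  have hm0 : ∀ d ≤ k, m d = 0 := by
    intro d hd
    set p : Polynomial ℂ := (Polynomial.Chebyshev.T ℂ d).comp (Polynomial.C (2/(N:ℂ)) * Polynomial.X - 1) with hp
    have hpd : p.natDegree ≤ k := by
      rw [hp, Polynomial.natDegree_comp, Polynomial.Chebyshev.natDegree_T]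
      have h1 : (Polynomial.C (2/(N:ℂ)) * Polynomial.X - 1).natDegree ≤ 1 := by
        refine (Polynomial.natDegree_sub_le _ _).trans ?_
        simp
        exact (Polynomial.natDegree_C_mul_le _ _).trans (by simp)
      simp
      nlinarith
    have : ∀ w : ℕ, (Polynomial.Chebyshev.T ℂ d).eval (2 * (w:ℂ) / N - 1) = ∑ i ∈ range (k+1), p.coeff i * (w:ℂ)^i := by
      intro w
      rw [← Polynomial.eval_eq_sum_range' (Nat.lt_succ_of_le hpd), hp, Polynomial.eval_comp]
      simp; congr 1; ring
    simp only [hm, this, mul_sum]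
    rw [sum_comm]
    apply sum_eq_zero
    intro i hi
    have h2 := hmom i (by simp at hi; omega)
    have h3 : (∑ w ∈ range (N+1), (σ w : ℂ) * (w:ℂ) ^ i) = 0 := by exact_mod_cast h2
    calc _ = p.coeff i * (∑ w ∈ range (N+1), (σ w : ℂ) * (w:ℂ) ^ i) := by
          rw [mul_sum]; apply sum_congr rfl; intros; ring
      _ = 0 := by rw [h3, mul_zero]
  have hm2 : ∀ d, ‖m d‖ ≤ 2 := by
    intro d
    refine le_trans (norm_sum_le_of_le _ (f := fun w : ℕ => (σ w : ℂ) * (Polynomial.Chebyshev.T ℂ d).eval (2 * (w:ℂ) / N - 1)) (n := fun w => |σ w|) ?_) hσ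
    intro w hw
    have hw' : (w:ℝ) ≤ N := by
      have : w ≤ N := by simp at hw; omega
      exact_mod_cast this
    rw [norm_mul, Complex.norm_real, Real.norm_eq_abs]
    have hx : ((2 * (w:ℂ) / N - 1)) = Complex.cos ((Real.arccos (2 * w / N - 1) : ℝ) : ℂ) := by
      rw [← Complex.ofReal_cos, Real.cos_arccos]
      · push_cast; ring
      · have : (0:ℝ) ≤ 2 * w / N := by positivity
        linarith
      · have : 2 * (w:ℝ) / N ≤ 2 := by rw [div_le_iff₀ hN0']; linarith
        linarith
    rw [hx, Polynomial.Chebyshev.T_complex_cos]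
    have : Complex.cos (((d:ℤ):ℂ) * ((Real.arccos (2 * w / N - 1) : ℝ) : ℂ)) = ((Real.cos (d * Real.arccos (2 * w / N - 1)) : ℝ) : ℂ) := by
      push_cast; rfl
    rw [this, Complex.norm_real, Real.norm_eq_abs]
    exact mul_le_of_le_one_right (abs_nonneg _) (Real.abs_cos_le_one _)
  have hsum : ((∑ w ∈ range (N+1), σ w * ∑ j ∈ range (M+1), g j * (w.choose j * (N-w).choose (M-j)) / N.choose M : ℝ) : ℂ)
      = ∑ d ∈ range (M+1), c d * m d := by
    rw [Complex.ofReal_sum]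
    simp only [hm, mul_sum]
    rw [sum_comm]
    apply sum_congr rfl
    intro w hw
    have hw' : w ≤ N := by simp at hw; omega
    rw [← mul_sum, Complex.ofReal_mul, ← qpoly_eval_nat N M g w hw']
    have := heval (2 * (w:ℂ) / N - 1)
    rw [show (N:ℂ) * ((1 + (2 * (w:ℂ) / N - 1)) / 2) = w by field_simp; ring] at this
    rw [this, mul_sum]
    apply sum_congr rfl; intros; ring
  rw [← Real.norm_eq_abs, ← Complex.norm_real, hsum]
  have hbound : ∀ d ∈ range (M+1), ‖c d * m d‖ ≤ 72 * (M:ℝ)^2 * Real.exp (-(k:ℝ)^2 / (16 * M)) := by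
    intro d hd
    by_cases hdk : d ≤ k
    · rw [hm0 d hdk]; simp; positivity
    push Not at hdk
    have hdM : d ≤ M := by simp at hd; omega
    set b : ℝ := k / (8 * M) with hb
    have hkM : (k:ℝ) ≤ M := by exact_mod_cast (by omega : k ≤ M)
    have hb0 : 0 ≤ b := by positivity
    have hb1 : b ≤ 1 := by rw [hb, div_le_one (by positivity)]; linarith
    have hcosh : Real.cosh b - 1 ≤ b ^ 2 := by
      have h1 := Real.cosh_le_exp_half_sq b
      have h2 := Real.exp_bound_div_one_sub_of_interval (x := b^2/2) (by positivity) (by nlinarith)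
      have h3 : 1 / (1 - b^2/2) ≤ 1 + b^2 := by
        rw [div_le_iff₀ (by nlinarith)]; nlinarith [mul_nonneg (sq_nonneg b) (by nlinarith : 0 ≤ 1 - b^2)]
      linarith
    have hF := aux_fourier M c b ((M+1) * (9 * √M) * Real.exp (4 * M * b^2)) (by
      intro a
      have h1 := qpoly_bound N M hM hN g hg ((a:ℂ) - b * Complex.I)
      rw [heval] at h1
      simp only [Polynomial.Chebyshev.T_complex_cos] at h1
      have h2 : Real.cosh ((a:ℂ) - b * Complex.I).im = Real.cosh b := by simp
      rw [h2] at h1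
      have h3 : ∑ d ∈ range (M+1), c d * Complex.cos (d * (a - b * Complex.I)) =
        ∑ d ∈ range (M+1), c d * Complex.cos (((d:ℤ):ℂ) * (a - b * Complex.I)) := by
        apply sum_congr rfl; intros; push_cast; rfl
      rw [h3]
      refine h1.trans ?_
      gcongr) d (by omega) hdM
    have hs : √(M:ℝ) ≤ M := by
      rw [Real.sqrt_le_left (by positivity)]; nlinarith
    rw [norm_mul]
    calc ‖c d‖ * ‖m d‖ ≤ (2 * ((M+1) * (9 * √M) * Real.exp (4 * M * b^2)) * Real.exp (-(d * b))) * 2 := by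
          gcongr; exact hm2 d
      _ ≤ (2 * ((M+M) * (9 * M) * Real.exp (4 * M * b^2)) * Real.exp (-(k * b))) * 2 := by gcongr
      _ = 72 * (M:ℝ)^2 * (Real.exp (4 * M * b^2) * Real.exp (-(k * b))) := by ring
      _ = _ := by
        rw [← Real.exp_add]
        congr 2
        rw [hb]; field_simp; ring
  refine (norm_sum_le_of_le _ hbound).trans ?_
  simp
  calc _ ≤ ((M:ℝ)+M) * (72 * (M:ℝ)^2 * Real.exp (-(k:ℝ)^2 / (16 * M))) := by gcongr
    _ = _ := by ring

lemma count_id (N M w j : ℕ) (hM : M ≤ N) (hw : w ≤ N) (hj : j ≤ M) (hjw : j ≤ w) :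
    (N-M).choose (w-j) * N.choose M * M.choose j = N.choose w * w.choose j * (N-w).choose (M-j) := by
  rw [mul_assoc, Nat.choose_mul hj, Nat.choose_mul hjw]
  by_cases h : w - j ≤ N - M
  · have h1 : (N-j).choose (w-j) = (N-j).choose (N-w) := by
      rw [← Nat.choose_symm (by omega : w - j ≤ N - j)]; congr 1; omega
    have h2 : (N-M).choose (w-j) = (N-j-(M-j)).choose (N-w-(M-j)) := by
      rw [← Nat.choose_symm h]; congr 1 <;> omega
    have h3 := Nat.choose_mul (n := N - j) (k := N - w) (s := M - j) (by omega)
    rw [h1, mul_assoc, h3, h2]; ring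
  · rw [Nat.choose_eq_zero_of_lt (by omega : N - M < w - j),
      Nat.choose_eq_zero_of_lt (by omega : N - w < M - j)]; simp

lemma count_card (T Z : Finset ι) (hZ : Z ⊆ T) (w : ℕ) :
    ((((univ : Finset ι).powersetCard w).filter (fun A => A ∩ T = Z)).card : ℝ) *
      ((Fintype.card ι).choose T.card * T.card.choose Z.card) =
     (Fintype.card ι).choose w * (w.choose Z.card * (Fintype.card ι - w).choose (T.card - Z.card)) := by
  have hT : T.card ≤ Fintype.card ι := card_le_univ T
  have hZT : Z.card ≤ T.card := card_le_card hZ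
  by_cases hw : w ≤ Fintype.card ι
  swap
  · have : (univ : Finset ι).powersetCard w = ∅ := by
      rw [powersetCard_eq_empty]; simpa using hw
    rw [this, Nat.choose_eq_zero_of_lt (by omega : Fintype.card ι < w)]; simp
  by_cases hjw : Z.card ≤ w
  · have hc : (((univ : Finset ι).powersetCard w).filter (fun A => A ∩ T = Z)).card =
        (Fintype.card ι - T.card).choose (w - Z.card) := by
      rw [← card_compl, ← card_powersetCard]
      apply card_bij' (fun A _ => A \ T) (fun B _ => B ∪ Z)
      · intro A hA
        simp only [mem_filter, mem_powersetCard] at hA ⊢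
        refine ⟨fun x hx => by simp at hx ⊢; exact hx.2, ?_⟩
        have := card_inter_add_card_sdiff A T
        rw [hA.2] at this; omega
      · intro B hB
        simp only [mem_filter, mem_powersetCard] at hB ⊢
        have hd : Disjoint B T := by
          rw [← subset_compl_iff_disjoint_right]; exact hB.1
        refine ⟨⟨subset_univ _, ?_⟩, ?_⟩
        · rw [card_union_of_disjoint (hd.mono_right hZ)]; omega
        · rw [union_inter_distrib_right, disjoint_iff_inter_eq_empty.mp hd, empty_union,
            inter_eq_left.mpr hZ]
      · intro A hA
        simp only [mem_filter] at hA
        rw [← hA.2]; exact sdiff_union_inter A T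
      · intro B hB
        simp only [mem_powersetCard] at hB
        have hd : Disjoint B T := by
          rw [← subset_compl_iff_disjoint_right]; exact hB.1
        rw [union_sdiff_distrib, sdiff_eq_self_of_disjoint hd, sdiff_eq_empty_iff_subset.mpr hZ, union_empty]
    rw [hc]
    have := count_id (Fintype.card ι) T.card w Z.card hT hw hZT hjw
    rw [← mul_assoc, ← mul_assoc]
    exact_mod_cast this
  · have : ((univ : Finset ι).powersetCard w).filter (fun A => A ∩ T = Z) = ∅ := by
      apply filter_eq_empty_iff.mpr
      intro A hA h
      simp only [mem_powersetCard] at hA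
      apply hjw
      rw [← h, ← hA.2]
      exact card_le_card inter_subset_left
    rw [this, Nat.choose_eq_zero_of_lt (by omega : w < Z.card)]; simp

def indB (A : Finset ι) : ι → Bool := fun i => decide (i ∈ A)

lemma sum_indB (F : (ι → Bool) → ℝ) : ∑ x, F x = ∑ A : Finset ι, F (indB A) := by
  symm
  refine sum_bij' (fun A _ => indB A) (fun x _ => univ.filter (fun i => x i = true)) ?_ ?_ ?_ ?_ ?_
  · simp
  · simp
  · intro A _; ext i; simp [indB]
  · intro x _; ext i; simp [indB]
  · simp

lemma wt_indB (A : Finset ι) : wt (indB A) = A.card := by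
  simp [wt, indB]

noncomputable def pw (μ : (ι → Bool) → ℝ) (w : ℕ) : ℝ := ∑ x, if wt x = w then μ x else 0

lemma pw_eq (μ : (ι → Bool) → ℝ) (hμ : SymmDist μ) (A : Finset ι) :
    pw μ A.card = (Fintype.card ι).choose A.card * μ (indB A) := by
  rw [pw, sum_indB]
  simp only [wt_indB]
  rw [← sum_filter, sum_congr rfl (g := fun _ => μ (indB A))]
  · rw [sum_const, nsmul_eq_mul]
    congr 2
    rw [← card_univ, ← card_powersetCard]
    congr 1
    ext B; simp [mem_powersetCard]
  · intro B hB
    apply hμ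
    simp at hB
    rw [wt_indB, wt_indB, hB]

lemma sum_by_wt (μ : (ι → Bool) → ℝ) (φ : ℕ → ℝ) :
    ∑ x, μ x * φ (wt x) = ∑ w ∈ range (Fintype.card ι + 1), pw μ w * φ w := by
  simp only [pw, sum_mul]
  rw [sum_comm]
  apply sum_congr rfl
  intro x _
  have : wt x ∈ range (Fintype.card ι + 1) := by
    simp only [mem_range, wt]
    exact Nat.lt_succ_of_le (card_le_univ _)
  rw [sum_eq_single_of_mem _ this]
  · simp
  · intro b _ hb; rw [if_neg (Ne.symm hb)]; simp

noncomputable def gav (T : Finset ι) (G : (ι → Bool) → ℝ) (j : ℕ) : ℝ :=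
  (∑ Z ∈ T.powersetCard j, G (indB Z)) / T.card.choose j

lemma gav_le (T : Finset ι) (G : (ι → Bool) → ℝ) (hG : ∀ x, |G x| ≤ 1) (j : ℕ) : |gav T G j| ≤ 1 := by
  rw [gav, abs_div, Nat.abs_cast]
  apply div_le_one_of_le₀ _ (by positivity)
  refine (abs_sum_le_sum_abs _ _).trans ?_
  refine (sum_le_sum (fun i _ => hG _)).trans ?_
  simp

lemma sum_symm (μ : (ι → Bool) → ℝ) (hμ : SymmDist μ) (T : Finset ι) (G : (ι → Bool) → ℝ)
    (hG : ∀ x y, (∀ i ∈ T, x i = y i) → G x = G y) :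
    ∑ x, μ x * G x = ∑ w ∈ range (Fintype.card ι + 1), pw μ w *
      ∑ j ∈ range (T.card + 1), gav T G j *
        (w.choose j * (Fintype.card ι - w).choose (T.card - j)) / (Fintype.card ι).choose T.card := by
  rw [sum_indB, ← powerset_univ, sum_powerset, card_univ]
  apply sum_congr rfl
  intro w hw
  have hw' : w ≤ Fintype.card ι := by simp at hw; omega
  have hcN : (0:ℝ) < (Fintype.card ι).choose w := by exact_mod_cast Nat.choose_pos hw'
  have hcM : (0:ℝ) < (Fintype.card ι).choose T.card := by exact_mod_cast Nat.choose_pos (card_le_univ T)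
  have h1 : ∑ A ∈ (univ : Finset ι).powersetCard w, μ (indB A) * G (indB A) =
      pw μ w / (Fintype.card ι).choose w * ∑ A ∈ (univ : Finset ι).powersetCard w, G (indB A) := by
    rw [mul_sum]
    apply sum_congr rfl
    intro A hA
    have hA' := (mem_powersetCard.mp hA).2
    subst hA'
    rw [pw_eq μ hμ A]; field_simp
  have h2 : ∑ A ∈ (univ : Finset ι).powersetCard w, G (indB A) =
      ∑ Z ∈ T.powerset, ((((univ : Finset ι).powersetCard w).filter (fun A => A ∩ T = Z)).card : ℝ) * G (indB Z) := by
    rw [← sum_fiberwise_of_maps_to (t := T.powerset) (g := fun A => A ∩ T)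
      (fun A _ => mem_powerset.mpr inter_subset_right)]
    apply sum_congr rfl
    intro Z hZ
    rw [← nsmul_eq_mul, ← sum_const]
    apply sum_congr rfl
    intro A hA
    apply hG
    intro i hi
    simp only [mem_filter] at hA
    rw [← hA.2]
    simp [indB, hi]
  rw [h1, h2, sum_powerset, div_mul_eq_mul_div, mul_div_assoc]
  congr 1
  rw [sum_div]
  apply sum_congr rfl
  intro j hj
  have hj' : j ≤ T.card := by simp at hj; omega
  have hcj : (0:ℝ) < T.card.choose j := by exact_mod_cast Nat.choose_pos hj'
  rw [gav, div_mul_eq_mul_div, div_div, sum_mul, sum_div, sum_div]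
  apply sum_congr rfl
  intro Z hZ
  obtain ⟨hZ1, hZ2⟩ := mem_powersetCard.mp hZ
  have := count_card T Z hZ1 w
  rw [hZ2] at this
  rw [div_eq_div_iff hcN.ne' (by positivity)]
  linear_combination G (indB Z) * this

lemma moment_match (X Y : (ι → Bool) → ℝ) (k : ℕ) (h : PerfIndist X Y k) (i : ℕ) (hi : i ≤ k) :
    ∑ x, X x * (wt x : ℝ) ^ i = ∑ x, Y x * (wt x : ℝ) ^ i := by
  have key : ∀ μ : (ι → Bool) → ℝ, ∑ x, μ x * (wt x : ℝ) ^ i =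
      ∑ φ : Fin i → ι, marg μ (univ.image φ) (fun _ => true) := by
    intro μ
    simp only [marg]
    rw [sum_comm]
    apply sum_congr rfl
    intro x _
    have h1 : (wt x : ℝ) = ∑ a : ι, if x a = true then 1 else 0 := by
      simp [wt]
    rw [h1, sum_pow', mul_sum, Fintype.piFinset_univ]
    apply sum_congr rfl
    intro φ _
    rw [prod_ite_zero]
    simp
  rw [key, key]
  apply sum_congr rfl
  intro φ _
  apply h
  refine card_image_le.trans ?_
  simpa using hi

lemma core (X Y : (ι → Bool) → ℝ) (hX : IsProb X) (hY : IsProb Y) (sX : SymmDist X) (sY : SymmDist Y)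
    (k : ℕ) (h : PerfIndist X Y k) (T : Finset ι) (hT : 0 < T.card) (hN : 64 * T.card ≤ Fintype.card ι)
    (G : (ι → Bool) → ℝ) (hG1 : ∀ x, |G x| ≤ 1) (hG : ∀ x y, (∀ i ∈ T, x i = y i) → G x = G y) :
    |∑ x, X x * G x - ∑ x, Y x * G x| ≤
      144 * (T.card:ℝ) ^ 3 * Real.exp (-(k:ℝ)^2 / (16 * T.card)) := by
  have hpw : ∀ μ : (ι → Bool) → ℝ, IsProb μ → ∑ w ∈ range (Fintype.card ι + 1), |pw μ w| = 1 := by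
    intro μ hμ
    have := sum_by_wt μ (fun _ => 1)
    simp only [mul_one] at this
    rw [← hμ.2, this]
    apply sum_congr rfl
    intro w _
    apply abs_of_nonneg
    apply sum_nonneg
    intro x _
    split_ifs
    · exact hμ.1 x
    · exact le_rfl
  rw [sum_symm X sX T G hG, sum_symm Y sY T G hG, ← sum_sub_distrib]
  simp only [← sub_mul]
  apply main_moment _ _ k hT hN _ (gav_le T G hG1) (fun w => pw X w - pw Y w)
  · refine (sum_le_sum (fun w _ => abs_sub _ _)).trans ?_
    rw [sum_add_distrib, hpw X hX, hpw Y hY]; norm_num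
  · intro i hi
    have := moment_match X Y k h i hi
    rw [sum_by_wt X (fun w => (w:ℝ)^i), sum_by_wt Y (fun w => (w:ℝ)^i)] at this
    simp only [sub_mul]
    rw [sum_sub_distrib, this, sub_self]

noncomputable def sg (b : Bool) : ℝ := if b then -1 else 1

noncomputable def chi {n : ℕ} (S : Finset (Fin n)) (z : Fin n → Bool) : ℝ := ∏ i ∈ S, sg (z i)

lemma abs_sg (b : Bool) : |sg b| = 1 := by cases b <;> simp [sg]

lemma abs_chi {n : ℕ} (S : Finset (Fin n)) (z : Fin n → Bool) : |chi S z| = 1 := by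
  rw [chi, abs_prod]; simp [abs_sg]

lemma chi_orth {n : ℕ} (S U : Finset (Fin n)) :
    ∑ z, chi S z * chi U z = if S = U then (2:ℝ) ^ n else 0 := by
  have h1 : ∀ z : Fin n → Bool, chi S z * chi U z =
      ∏ i, ((if i ∈ S then sg (z i) else 1) * (if i ∈ U then sg (z i) else 1)) := by
    intro z
    rw [prod_mul_distrib, prod_ite_mem, prod_ite_mem, univ_inter, univ_inter]; rfl
  simp only [h1]
  have h2 := prod_univ_sum (fun _ : Fin n => (univ : Finset Bool))
    (fun i b => ((if i ∈ S then sg b else 1) * (if i ∈ U then sg b else 1)))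
  rw [Fintype.piFinset_univ] at h2
  rw [← h2]
  split_ifs with h
  · subst h
    have : ∀ i : Fin n, ∑ b : Bool, ((if i ∈ S then sg b else 1) * (if i ∈ S then sg b else 1)) = 2 := by
      intro i
      split_ifs <;> simp [sg] <;> norm_num
    rw [prod_congr rfl (fun i _ => this i)]; simp
  · have : ∃ i, ¬ (i ∈ S ↔ i ∈ U) := by
      by_contra hc; push Not at hc; exact h (Finset.ext hc)
    obtain ⟨i, hi⟩ := this
    apply prod_eq_zero (mem_univ i)
    by_cases hS : i ∈ S <;> by_cases hU : i ∈ U <;> simp [hS, hU, sg] <;> exact absurd (by tauto) hi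

lemma perf_of_chi {n : ℕ} (A B : (Fin n → Bool) → ℝ) (K : ℕ)
    (h : ∀ U : Finset (Fin n), U.card ≤ K → ∑ z, A z * chi U z = ∑ z, B z * chi U z) :
    PerfIndist A B K := by
  intro S hS z
  have key : ∀ μ : (Fin n → Bool) → ℝ, marg μ S z =
      (1/2) ^ S.card * ∑ U ∈ S.powerset, chi U z * ∑ x, μ x * chi U x := by
    intro μ
    rw [marg]
    simp only [mul_sum]
    rw [sum_comm]
    apply sum_congr rfl
    intro x _
    have h1 : ∏ i ∈ S, (1 + sg (z i) * sg (x i)) = ∑ U ∈ S.powerset, chi U z * chi U x := by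
      rw [prod_one_add]
      simp only [chi, prod_mul_distrib]
    have h2 : ∏ i ∈ S, (1 + sg (z i) * sg (x i)) = if ∀ i ∈ S, x i = z i then (2:ℝ) ^ S.card else 0 := by
      rw [← prod_const]
      refine Eq.trans ?_ ((prod_ite_zero (s := S) (p := fun i => x i = z i) (f := fun _ => (2:ℝ))).trans (by congr))
      apply prod_congr rfl
      intro i _
      cases x i <;> cases z i <;> simp [sg] <;> norm_num
    have h3 : ∑ U ∈ S.powerset, (1/2:ℝ) ^ S.card * (chi U z * (μ x * chi U x)) =
        (1/2) ^ S.card * μ x * ∑ U ∈ S.powerset, chi U z * chi U x := by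
      rw [mul_sum]; apply sum_congr rfl; intros; ring
    rw [h3, ← h1, h2]
    split_ifs
    · have : (1/2:ℝ) ^ S.card * 2 ^ S.card = 1 := by rw [← mul_pow]; norm_num
      linear_combination (-μ x) * this
    · simp
  rw [key, key]
  congr 1
  apply sum_congr rfl
  intro U hU
  rw [h U ((card_le_card (mem_powerset.mp hU)).trans hS)]

lemma rounding {n : ℕ} (P Q : (Fin n → Bool) → ℝ) (hP : IsProb P) (hQ : IsProb Q) (K : ℕ) (ε : ℝ)
    (hD : ∀ S : Finset (Fin n), 0 < S.card → S.card ≤ K → |∑ z, P z * chi S z - ∑ z, Q z * chi S z| ≤ ε) (hε : 0 ≤ ε) :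
    ∃ A B : (Fin n → Bool) → ℝ, IsProb A ∧ IsProb B ∧ PerfIndist A B K ∧
      TV P A ≤ 3/4 * (n:ℝ)^K * ε ∧ TV Q B ≤ 3/4 * (n:ℝ)^K * ε := by
  set F : Finset (Finset (Fin n)) := univ.filter (fun S => 0 < S.card ∧ S.card ≤ K) with hF
  set D : Finset (Fin n) → ℝ := fun S => ∑ z, P z * chi S z - ∑ z, Q z * chi S z with hDd
  set η : ℝ := ∑ S ∈ F, |D S| / 2 with hη
  set corr : (Fin n → Bool) → ℝ := fun z => (∑ S ∈ F, (D S / 2) * chi S z) / 2 ^ n with hcorr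
  have hη0 : 0 ≤ η := sum_nonneg (fun S _ => by positivity)
  have h2n : (0:ℝ) < 2 ^ n := by positivity
  have hFc : (F.card : ℝ) ≤ (n:ℝ) ^ K := by
    have h1 : F ⊆ (univ : Finset (Fin K → Fin n)).image (fun φ => univ.image φ) := by
      intro S hS
      simp only [hF, mem_filter, mem_univ, true_and] at hS
      obtain ⟨hS1, hS2⟩ := hS
      have hne : Nonempty S := (card_pos.mp hS1).to_subtype
      have : Nonempty (S ↪ Fin K) := by
        rw [Function.Embedding.nonempty_iff_card_le]; simpa using hS2
      obtain ⟨e⟩ := this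
      have hsur := Function.invFun_surjective e.injective
      simp only [mem_image, mem_univ, true_and]
      refine ⟨fun a => (Function.invFun e a : S), ?_⟩
      ext i
      simp only [mem_image, mem_univ, true_and]
      constructor
      · rintro ⟨a, rfl⟩; exact Subtype.property _
      · intro hi
        obtain ⟨a, ha⟩ := hsur ⟨i, hi⟩
        exact ⟨a, by rw [ha]⟩
    have h2 := (card_le_card h1).trans card_image_le
    simp at h2
    exact_mod_cast h2
  have hηb : η ≤ (n:ℝ)^K * ε / 2 := by
    calc η ≤ ∑ S ∈ F, ε / 2 := by
          apply sum_le_sum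
          intro S hS
          simp only [hF, mem_filter, mem_univ, true_and] at hS
          have := hD S hS.1 hS.2
          simp only [hDd]; linarith
      _ = F.card * (ε / 2) := by simp
      _ ≤ (n:ℝ)^K * (ε / 2) := by gcongr
      _ = _ := by ring
  have hcb : ∀ z, |corr z| ≤ η / 2 ^ n := by
    intro z
    simp only [hcorr, abs_div, abs_of_pos h2n, hη]
    gcongr
    refine (abs_sum_le_sum_abs _ _).trans (le_of_eq ?_)
    apply sum_congr rfl
    intro S _
    rw [abs_mul, abs_chi, mul_one, abs_div]; simp
  have hcchi : ∀ U, ∑ z, corr z * chi U z = if U ∈ F then D U / 2 else 0 := by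
    intro U
    have : ∀ z, corr z * chi U z = ∑ S ∈ F, (D S / 2 / 2^n) * (chi S z * chi U z) := by
      intro z
      simp only [hcorr]
      rw [sum_div, sum_mul]; apply sum_congr rfl; intros; ring
    simp only [this]
    rw [sum_comm]
    simp only [← mul_sum, chi_orth]
    simp only [mul_ite, mul_zero, sum_ite_eq']
    split_ifs
    · field_simp
    · rfl
  have hchi0 : ∀ z : Fin n → Bool, chi ∅ z = 1 := by intro z; simp [chi]
  have hcs : ∑ z, corr z = 0 := by
    have := hcchi ∅
    simp only [hchi0, mul_one] at this
    rw [this, if_neg]; simp [hF]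
  have hu : ∑ _z : Fin n → Bool, η / 2 ^ n = η := by
    simp; field_simp
  have h1η : (0:ℝ) < 1 + η := by linarith
  have hprob : ∀ (R c : (Fin n → Bool) → ℝ), IsProb R → (∀ z, |c z| ≤ η / 2^n) → ∑ z, c z = 0 →
      IsProb (fun z => (R z + c z + η / 2^n) / (1 + η)) ∧
      TV R (fun z => (R z + c z + η / 2^n) / (1 + η)) ≤ 3/4 * (n:ℝ)^K * ε := by
    intro R c hR hc hc0
    refine ⟨⟨?_, ?_⟩, ?_⟩
    · intro z
      apply div_nonneg _ h1η.le
      have := hR.1 z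
      have := (abs_le.mp (hc z)).1
      linarith
    · rw [← sum_div, sum_add_distrib, sum_add_distrib, hR.2, hc0, hu, add_zero, div_self h1η.ne']
    · have : ∀ z, |R z - (R z + c z + η / 2^n) / (1 + η)| ≤ η * R z + η / 2^n + η / 2^n := by
        intro z
        have e : R z - (R z + c z + η / 2^n) / (1 + η) = (η * R z - c z - η / 2^n) / (1 + η) := by
          field_simp; ring
        have hr := mul_nonneg hη0 (hR.1 z)
        have hc' := abs_le.mp (hc z)
        have hp : 0 ≤ η / 2 ^ n := by positivity
        rw [e, abs_div, abs_of_pos h1η]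
        refine (div_le_self (abs_nonneg _) (by linarith)).trans ?_
        rw [abs_le]; constructor <;> linarith
      have hs := sum_le_sum (fun z (_ : z ∈ univ) => this z)
      rw [sum_add_distrib, sum_add_distrib, hu, ← mul_sum, hR.2] at hs
      simp only [TV]
      linarith
  clear_value η
  obtain ⟨a1, a2⟩ := hprob P (fun z => - corr z) hP (by simpa using hcb) (by simp [hcs])
  obtain ⟨b1, b2⟩ := hprob Q corr hQ hcb hcs
  refine ⟨_, _, a1, b1, ?_, a2, b2⟩
  apply perf_of_chi
  intro U hU
  have e1 : ∀ (R c : (Fin n → Bool) → ℝ), ∑ z, (R z + c z + η / 2^n) / (1 + η) * chi U z =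
      (∑ z, R z * chi U z + ∑ z, c z * chi U z + ∑ z, η / 2^n * chi U z) / (1 + η) := by
    intro R c
    rw [← sum_add_distrib, ← sum_add_distrib, sum_div]
    apply sum_congr rfl; intros; ring
  rw [e1, e1]
  congr 2
  simp only [neg_mul, sum_neg_distrib]
  rw [hcchi U]
  by_cases hU0 : 0 < U.card
  · rw [if_pos (by simp only [hF, mem_filter, mem_univ, true_and]; exact ⟨hU0, hU⟩)]
    simp only [hDd]; ring
  · have : U = ∅ := by rw [← card_eq_zero]; omega
    subst this
    rw [if_neg (by simp [hF])]
    simp only [hchi0, mul_one, hP.2, hQ.2]; simp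

lemma push_sum {t n : ℕ} (f : Fin n → (Fin t → Bool) → Bool)
    (μ : (Fin n × Fin t → Bool) → ℝ) (φ : (Fin n → Bool) → ℝ) :
    ∑ z, push f μ z * φ z = ∑ x, μ x * φ (fun i => f i (fun j => x (i, j))) := by
  simp only [push, sum_mul]
  rw [sum_comm]
  apply sum_congr rfl
  intro x _
  rw [sum_eq_single (fun i => f i (fun j => x (i, j)))]
  · simp
  · intro z _ hz
    rw [if_neg]
    · simp
    · intro h; exact hz (funext fun i => (h i).symm)
  · simp

lemma push_prob {t n : ℕ} (f : Fin n → (Fin t → Bool) → Bool)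
    (μ : (Fin n × Fin t → Bool) → ℝ) (h : IsProb μ) : IsProb (push f μ) := by
  constructor
  · intro z
    apply sum_nonneg
    intro x _
    split_ifs
    · exact h.1 x
    · exact le_rfl
  · have := push_sum f μ (fun _ => 1)
    simpa [h.2] using this

theorem stmt19 :
    ∃ C : ℝ, 0 < C ∧
      ∀ (t n k K : ℕ), 0 < t → 0 < n → 0 < k → 0 < K → (K : ℝ) ≤ (n : ℝ) / 64 →
        ∀ (f : Fin n → (Fin t → Bool) → Bool) (X Y : (Fin n × Fin t → Bool) → ℝ),
          IsProb X → IsProb Y → SymmDist X → SymmDist Y → PerfIndist X Y k →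
          ∃ A B : (Fin n → Bool) → ℝ, IsProb A ∧ IsProb B ∧ PerfIndist A B K ∧
            TV (push f X) A ≤
              C * ((t * K : ℕ) : ℝ) ^ ((3 : ℝ) / 2) * (n : ℝ) ^ K *
                Real.exp (-(k : ℝ) ^ 2 / (1156 * (t : ℝ) * (K : ℝ))) ∧
            TV (push f Y) B ≤
              C * ((t * K : ℕ) : ℝ) ^ ((3 : ℝ) / 2) * (n : ℝ) ^ K *
                Real.exp (-(k : ℝ) ^ 2 / (1156 * (t : ℝ) * (K : ℝ))) := by
  refine ⟨13, by norm_num, ?_⟩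
  intro t n k K ht hn hk hK hKn f X Y hX hY sX sY hXY
  have hKn' : 64 * K ≤ n := by
    have : (64:ℝ) * K ≤ n := by linarith
    exact_mod_cast this
  set M : ℝ := ((t * K : ℕ) : ℝ) with hM
  have hMpos : 0 < M := by
    rw [hM]; exact_mod_cast Nat.mul_pos ht hK
  set ε : ℝ := 17 * M ^ ((3:ℝ)/2) * Real.exp (-(k:ℝ)^2 / (1156 * t * K)) with hε
  have hε0 : 0 ≤ ε := by positivity
  obtain ⟨A, B, hA, hB, hAB, h1, h2⟩ := rounding (push f X) (push f Y) (push_prob f X hX) (push_prob f Y hY) K ε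
    (by
      intro S hS0 hSK
      rw [push_sum, push_sum]
      set G : (Fin n × Fin t → Bool) → ℝ := fun x => chi S (fun i => f i (fun j => x (i, j))) with hG
      set T : Finset (Fin n × Fin t) := S ×ˢ univ with hT
      have hTc : T.card = S.card * t := by simp [hT]
      have hT0 : 0 < T.card := by rw [hTc]; exact Nat.mul_pos hS0 ht
      have hb := core X Y hX hY sX sY k hXY T hT0 (by
          rw [hTc]; simp
          nlinarith [Nat.mul_le_mul_right t hSK, Nat.mul_le_mul_right t hKn'])
        G (fun x => (abs_chi _ _).le) (by
          intro x y hxy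
          simp only [hG, chi]
          apply prod_congr rfl
          intro i hi
          have : (fun j => x (i, j)) = fun j => y (i, j) := by
            funext j
            exact hxy (i, j) (by simp [hT, hi])
          rw [this])
      set d : ℝ := |∑ x, X x * G x - ∑ x, Y x * G x| with hd
      have hd0 : 0 ≤ d := abs_nonneg _
      have hd2 : d ≤ 2 := by
        have hle : ∀ μ : (Fin n × Fin t → Bool) → ℝ, IsProb μ → |∑ x, μ x * G x| ≤ 1 := by
          intro μ hμ
          refine (abs_sum_le_sum_abs _ _).trans ?_
          rw [← hμ.2]
          apply sum_le_sum
          intro x _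
          rw [abs_mul, show |G x| = 1 from abs_chi _ _, mul_one, abs_of_nonneg (hμ.1 x)]
        have := hle X hX
        have := hle Y hY
        rw [hd]
        refine (abs_sub _ _).trans ?_
        linarith
      have hTM : (T.card : ℝ) ≤ M := by
        rw [hM]
        have : T.card ≤ t * K := by rw [hTc, mul_comm]; exact Nat.mul_le_mul_left t hSK
        exact_mod_cast this
      have hT0' : (0:ℝ) < T.card := by exact_mod_cast hT0
      have hb2 : d ≤ 144 * M ^ 3 * Real.exp (-(k:ℝ)^2 / (16 * M)) := by
        refine hb.trans ?_
        have : -(k:ℝ)^2 / (16 * T.card) ≤ -(k:ℝ)^2 / (16 * M) := by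
          rw [neg_div, neg_div]
          apply neg_le_neg
          gcongr
        gcongr
      have hsq : d ^ 2 ≤ ε ^ 2 := by
        have e1 : (M ^ ((3:ℝ)/2)) ^ 2 = M ^ 3 := by
          rw [← Real.rpow_natCast, ← Real.rpow_mul hMpos.le, ← Real.rpow_natCast M 3]; norm_num
        have e2 : Real.exp (-(k:ℝ)^2 / (1156 * t * K)) ^ 2 = Real.exp (-(k:ℝ)^2 / (578 * M)) := by
          rw [← Real.exp_nat_mul, hM]
          congr 1
          push_cast
          have : (t:ℝ) ≠ 0 := by positivity
          have : (K:ℝ) ≠ 0 := by positivity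
          field_simp; norm_num
        have e3 : -(k:ℝ)^2 / (16 * M) ≤ -(k:ℝ)^2 / (578 * M) := by
          rw [neg_div, neg_div]
          apply neg_le_neg
          gcongr
          norm_num
        calc d ^ 2 ≤ 2 * d := by nlinarith
          _ ≤ 2 * (144 * M ^ 3 * Real.exp (-(k:ℝ)^2 / (16 * M))) := by gcongr
          _ ≤ 2 * (144 * M ^ 3 * Real.exp (-(k:ℝ)^2 / (578 * M))) := by gcongr
          _ = 288 * (M ^ 3 * Real.exp (-(k:ℝ)^2 / (578 * M))) := by ring
          _ ≤ 289 * (M ^ 3 * Real.exp (-(k:ℝ)^2 / (578 * M))) := by gcongr; norm_num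
          _ = ε ^ 2 := by rw [hε, mul_pow, mul_pow, e1, e2]; ring
      exact (sq_le_sq₀ hd0 hε0).mp hsq) hε0
  have hfin : 3/4 * (n:ℝ)^K * ε ≤ 13 * M ^ ((3:ℝ)/2) * (n:ℝ)^K * Real.exp (-(k:ℝ)^2 / (1156 * t * K)) := by
    have hp : 0 ≤ (n:ℝ)^K * (M ^ ((3:ℝ)/2) * Real.exp (-(k:ℝ)^2 / (1156 * t * K))) := by positivity
    rw [hε]; nlinarith
  exact ⟨A, B, hA, hB, hAB, h1.trans hfin, h2.trans hfin⟩
end
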